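/- Let σ > 0 and 0 < α < 1/2. Let p(x) = σ be the constant function and let f(x) = (σ/α)·max(0, x − (1 − 2α)) on [-1,1]; note that |p(x) − f(x)| ≤ σ for all x ∈ [-1,1]. Then every polynomial q of degree at most 1 that minimizes sup_{x∈[-1,1]} |f(x) − r(x)| over all degree-at-most-1 polynomials r satisfies sup_{x∈[-1,1]} |p(x) − q(x)| ≥ (2 − α)·σ. -/

import Mathlib

open Polynomial

/-- The sup-norm of `f` over `[-1, 1]`. -/
noncomputable def supNorm (f : ℝ → ℝ) : ℝ := ⨆ x : Set.Icc (-1 : ℝ) 1, |f x|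

lemma le_supNorm_aux (f : ℝ → ℝ) (hf : Continuous f) (x : ℝ) (hx : x ∈ Set.Icc (-1 : ℝ) 1) :
    |f x| ≤ supNorm f := by
  have hb : BddAbove (Set.range fun y : Set.Icc (-1 : ℝ) 1 => |f y|) :=
    (isCompact_range (by fun_prop)).bddAbove
  exact le_ciSup hb ⟨x, hx⟩

lemma ramp_low_aux (σ α x : ℝ) (h : x ≤ 1 - 2 * α) : σ / α * max 0 (x - (1 - 2 * α)) = 0 := by
  rw [max_eq_left (by linarith), mul_zero]

lemma ramp_high_aux (σ α x : ℝ) (hα : 0 < α) (h : 1 - 2 * α ≤ x) :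
    ∃ t : ℝ, x = 1 - α * t ∧ t ≤ 2 ∧ σ / α * max 0 (x - (1 - 2 * α)) = σ * (2 - t) := by
  refine ⟨(1 - x) / α, by field_simp; ring, ?_, ?_⟩
  · rw [div_le_iff₀ hα]; linarith
  · rw [max_eq_right (by linarith)]; field_simp; ring

/-- `ℓ∞` projection can be a factor-`(2−α)` away: with `p ≡ σ` and
`f(x) = (σ/α) max(0, x−(1−2α))`, we have `|p − f| ≤ σ` on `[-1,1]`, yet any best `ℓ∞`
degree-1 approximation `q` of `f` satisfies `‖p − q‖_∞ ≥ (2−α)σ`. -/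
theorem linf_projection_lower_bound (σ α : ℝ) (hσ : 0 < σ) (hα0 : 0 < α) (hα1 : α < 1 / 2) :
    (∀ x ∈ Set.Icc (-1 : ℝ) 1,
      |σ - σ / α * max 0 (x - (1 - 2 * α))| ≤ σ) ∧
    ∀ q : Polynomial ℝ, q.natDegree ≤ 1 →
      (∀ r : Polynomial ℝ, r.natDegree ≤ 1 →
        supNorm (fun x => σ / α * max 0 (x - (1 - 2 * α)) - q.eval x) ≤
          supNorm (fun x => σ / α * max 0 (x - (1 - 2 * α)) - r.eval x)) →
      (2 - α) * σ ≤ supNorm (fun x => σ - q.eval x) := by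
  constructor
  · intro x hx
    rcases le_total x (1 - 2 * α) with h | h
    · rw [ramp_low_aux σ α x h, sub_zero, abs_of_pos hσ]
    · obtain ⟨t, ht, ht2, he⟩ := ramp_high_aux σ α x hα0 h
      have ht0 : 0 ≤ t := by
        by_contra hn
        have := hx.2
        nlinarith
      rw [he, abs_le]
      constructor <;> nlinarith
  · intro q hq hmin
    have hE : supNorm (fun x => σ / α * max 0 (x - (1 - 2 * α)) - (C σ * X + C (σ * α)).eval x)
        ≤ σ * (1 - α) := by
      have : Nonempty (Set.Icc (-1 : ℝ) 1) := ⟨⟨0, by norm_num⟩⟩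
      refine ciSup_le ?_
      rintro ⟨x, hx1, hx2⟩
      simp only [eval_add, eval_mul, eval_C, eval_X]
      rcases le_total x (1 - 2 * α) with h | h
      · rw [ramp_low_aux σ α x h, abs_le]
        constructor <;> nlinarith
      · obtain ⟨t, ht, ht2, he⟩ := ramp_high_aux σ α x hα0 h
        have ht0 : 0 ≤ t := by
          by_contra hn
          nlinarith
        have hpos : 0 < σ * (1 - α) := mul_pos hσ (by linarith)
        rw [he, ht, show σ * (2 - t) - (σ * (1 - α * t) + σ * α) = (σ * (1 - α)) * (1 - t) by ring,
          abs_le]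
        constructor <;> nlinarith
    have hle := (hmin _ natDegree_linear_le).trans hE
    obtain ⟨a, b, rfl⟩ := exists_eq_X_add_C_of_natDegree_le_one hq
    have key := fun x hx => (le_supNorm_aux (fun x => σ / α * max 0 (x - (1 - 2 * α)) -
      (C a * X + C b).eval x) (by fun_prop) x hx).trans hle
    have k1 := key (-1) (by norm_num)
    have k2 := key 1 (by norm_num)
    have k3 := key (1 - 2 * α) ⟨by linarith, by linarith⟩
    have e2 : σ / α * max 0 (1 - (1 - 2 * α)) = 2 * σ := by
      rw [max_eq_right (by linarith)]; field_simp; ring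
    simp only [eval_add, eval_mul, eval_C, eval_X] at k1 k2 k3
    rw [ramp_low_aux σ α _ (by linarith), abs_le] at k1 k3
    rw [e2, abs_le] at k2
    have hm : b - a ≤ -(σ * (1 - α)) := by
      have h2 : 2 * σ - σ * (1 - α) ≤ a + b := by linarith [k2.2]
      have h3 : a * (1 - 2 * α) + b ≤ σ * (1 - α) := by linarith [k3.1]
      have h4 := mul_le_mul_of_nonneg_left h2 (by linarith : 0 ≤ 1 - α)
      have : α * (b - a) ≤ α * (-(σ * (1 - α))) := by nlinarith
      exact le_of_mul_le_mul_left this hα0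
    have hf := le_supNorm_aux (fun x => σ - (C a * X + C b).eval x) (by fun_prop) (-1) (by norm_num)
    refine le_trans ?_ hf
    refine le_trans ?_ (le_abs_self _)
    simp only [eval_add, eval_mul, eval_C, eval_X]
    linarith
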